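/- Let H be a real inner product space with inner product (·,·) and induced norm ‖·‖. Fix integers k ≥ 1 and N ≥ 0 and real numbers γ, τ > 0 and c₀ ≥ 0 with γ c₀ τ ≤ √2. Let B : H × H → ℝ be a symmetric bilinear map with B(x, x) ≥ 0 for all x ∈ H, and for each 1 ≤ n ≤ N let C_n : H × H → ℝ be a bilinear map with |C_n(x, y)| ≤ c₀ ‖x‖ ‖y‖ for all x, y ∈ H; set D_n := B − C_n. For families of vectors v₁⁻, …, v_k⁻ and v₁⁺, …, v_k⁺ in H and a bilinear map D, set v̄_i := (v_i⁺ + v_i⁻)/2 and m_i := (v̄_i, v̄_i); say that the step equations hold for D if for every 1 ≤ i ≤ k and every χ ∈ H one has (γτ)⁻¹ (v_i⁺ − v_i⁻, χ) = −m_i D(v̄_i, χ) + (v̄_i, χ) D(v̄_i, v̄_i) + Σ_{l<i} m_i (v_l⁺, χ) D(v̄_i, v_l⁺) + Σ_{l>i} m_i (v_l⁻, χ) D(v̄_i, v_l⁻); and say that the step is nondegenerate for D if (τγ)⁻¹ ≠ (1/2) D(v̄_i, v̄_i) for every 1 ≤ i ≤ k. Let (v_i^n)_{1≤i≤k, 0≤n≤N}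 be vectors in H with (v_i⁰, v_j⁰) = δ_{ij} for all i, j, such that for each 1 ≤ n ≤ N the families (v_i^{n−1})_i and (v_i^{n})_i satisfy the step equations for D_n and the step is nondegenerate for D_n. Then for all 0 ≤ n ≤ N and all 1 ≤ i, j ≤ k one has (v_i^n, v_j^n) = δ_{ij} and B(v_i^n, v_i^n) ≤ B(v_i⁰, v_i⁰) + 2 γ c₀² n τ. -/

import Mathlib

/-!
The scheme updates the vectors one index at a time, Gauss-Seidel fashion: when index `i` is
treated, the current family `e` consists of `vₗ⁺` for `l < i` and `vₗ⁻` for `l ≥ i`.  Assume `e`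
is orthonormal and write `w = v̄ᵢ`, `m = (w, w)`, `d = vᵢ⁺ - vᵢ⁻`.

* Testing with `χ = e j`, `j ≠ i`, leaves `(2 / (γτ)) (w, e j) = (w, e j) D(w, w)`, so
  nondegeneracy forces `(w, e j) = 0`, hence `(vᵢ⁺, e j) = 0`.
* Testing with `χ = w` then gives `|vᵢ⁺|² - |vᵢ⁻|² = 0`.  So replacing `vᵢ⁻` by `vᵢ⁺` keeps the
  family orthonormal (`sweep_index`), and going through all indices treats a full time step
  (`step_orthonormal`).
* Testing with `χ = d`, which is orthogonal to `w` and to every `e j`, `j ≠ i`, gives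
  `|d|² = -γτ m D(w, d)`.  By symmetry `2 B(w, d) = B(vᵢ⁺, vᵢ⁺) - B(vᵢ⁻, vᵢ⁻)`, while
  `|C(w, d)| ≤ c₀ √m |d|`.  The parallelogram law `m = 1 - |d|² / 4` excludes `m = 0`, because
  `m = 0` would also give `d = 0`.  Dividing by `m` and absorbing `|d|` by Young's inequality
  bounds the energy increment of one step (`sweep_energy`); induction on `n` finishes the proof.
-/

open scoped RealInnerProductSpace BigOperators

/-- The midpoint `v̄ᵢ = (vᵢ⁺ + vᵢ⁻)/2` of two families of vectors. -/
noncomputable def midVec {H : Type*} [NormedAddCommGroup H] [InnerProductSpace ℝ H]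
    {k : ℕ} (vm vp : Fin k → H) (i : Fin k) : H :=
  (2 : ℝ)⁻¹ • (vp i + vm i)

/-- One step of the retraction-free orthonormality-preserving scheme: for every `i` and every
test vector `χ`,
`(γτ)⁻¹ (vᵢ⁺ − vᵢ⁻, χ) = −mᵢ D(v̄ᵢ, χ) + (v̄ᵢ, χ) D(v̄ᵢ, v̄ᵢ)
  + Σ_{l<i} mᵢ (v_l⁺, χ) D(v̄ᵢ, v_l⁺) + Σ_{l>i} mᵢ (v_l⁻, χ) D(v̄ᵢ, v_l⁻)`,
where `mᵢ = (v̄ᵢ, v̄ᵢ)`. -/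
def StepEqs {H : Type*} [NormedAddCommGroup H] [InnerProductSpace ℝ H]
    {k : ℕ} (γ τ : ℝ) (vm vp : Fin k → H) (D : H →ₗ[ℝ] H →ₗ[ℝ] ℝ) : Prop :=
  ∀ i : Fin k, ∀ χ : H,
    (γ * τ)⁻¹ * ⟪vp i - vm i, χ⟫ =
      -⟪midVec vm vp i, midVec vm vp i⟫ * D (midVec vm vp i) χ
      + ⟪midVec vm vp i, χ⟫ * D (midVec vm vp i) (midVec vm vp i)
      + ∑ l ∈ Finset.univ.filter (fun l => l < i),
          ⟪midVec vm vp i, midVec vm vp i⟫ * ⟪vp l, χ⟫ * D (midVec vm vp i) (vp l)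
      + ∑ l ∈ Finset.univ.filter (fun l => i < l),
          ⟪midVec vm vp i, midVec vm vp i⟫ * ⟪vm l, χ⟫ * D (midVec vm vp i) (vm l)

/-- Nondegeneracy of one step of the scheme: `(τγ)⁻¹ ≠ (1/2) D(v̄ᵢ, v̄ᵢ)` for every `i`. -/
def StepNondeg {H : Type*} [NormedAddCommGroup H] [InnerProductSpace ℝ H]
    {k : ℕ} (γ τ : ℝ) (vm vp : Fin k → H) (D : H →ₗ[ℝ] H →ₗ[ℝ] ℝ) : Prop :=
  ∀ i : Fin k, (τ * γ)⁻¹ ≠ (1 / 2) * D (midVec vm vp i) (midVec vm vp i)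

/-- The equation for the update of `e i` to `y` within a family `e`, with step size `a = γτ`:
the two sums of the scheme are merged into one sum over `l ≠ i`. -/
def SweepEq {H : Type*} [NormedAddCommGroup H] [InnerProductSpace ℝ H] {k : ℕ}
    (a : ℝ) (D : H →ₗ[ℝ] H →ₗ[ℝ] ℝ) (e : Fin k → H) (i : Fin k) (y w : H) : Prop :=
  ∀ χ : H, a⁻¹ * ⟪y - e i, χ⟫ = -⟪w, w⟫ * D w χ + ⟪w, χ⟫ * D w w
    + ∑ l ∈ Finset.univ.erase i, ⟪w, w⟫ * ⟪e l, χ⟫ * D w (e l)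

/-- Updating one index of an orthonormal family by the scheme keeps the family orthonormal. -/
theorem sweep_index {H : Type*} [NormedAddCommGroup H] [InnerProductSpace ℝ H] {k : ℕ}
    {a : ℝ} (ha : 0 < a) {D : H →ₗ[ℝ] H →ₗ[ℝ] ℝ} {e : Fin k → H} {i : Fin k} {y w : H}
    (hw : w = (2 : ℝ)⁻¹ • (y + e i))
    (he : ∀ j l : Fin k, ⟪e j, e l⟫ = if j = l then (1 : ℝ) else 0)
    (hnd : a⁻¹ ≠ (1 / 2) * D w w) (heq : SweepEq a D e i y w) :
    (∀ j, j ≠ i → ⟪y, e j⟫ = 0) ∧ ⟪y, y⟫ = 1 := by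
  have hwj : ∀ j, j ≠ i → ⟪w, e j⟫ = 2⁻¹ * ⟪y, e j⟫ := by
    intro j hj
    rw [hw, real_inner_smul_left, inner_add_left, he i j, if_neg hj.symm, add_zero]
  have horth : ∀ j, j ≠ i → ⟪y, e j⟫ = 0 := by
    intro j hj
    have h := heq (e j)
    have hsum : ∑ l ∈ Finset.univ.erase i, ⟪w, w⟫ * ⟪e l, e j⟫ * D w (e l)
        = ⟪w, w⟫ * D w (e j) := by
      rw [Finset.sum_eq_single j]
      · rw [he, if_pos rfl, mul_one]
      · intro l _ hl
        simp [he, hl]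
      · intro h
        simp [hj] at h
    rw [hsum, inner_sub_left, he i j, if_neg hj.symm, hwj j hj] at h
    have h2 : ⟪y, e j⟫ * (a⁻¹ - (1 / 2) * D w w) = 0 := by linear_combination h
    exact (mul_eq_zero.mp h2).resolve_right (sub_ne_zero.mpr hnd)
  refine ⟨horth, ?_⟩
  have h := heq w
  have hsum : ∑ l ∈ Finset.univ.erase i, ⟪w, w⟫ * ⟪e l, w⟫ * D w (e l) = 0 := by
    refine Finset.sum_eq_zero fun l hl => ?_
    have hl' : l ≠ i := (Finset.mem_erase.mp hl).1
    rw [real_inner_comm w (e l), hwj l hl', horth l hl']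
    ring
  have hd : ⟪y - e i, w⟫ = 2⁻¹ * (⟪y, y⟫ - 1) := by
    rw [hw, real_inner_smul_right, inner_add_right, inner_sub_left, inner_sub_left, he i i,
      if_pos rfl, real_inner_comm y (e i)]
    ring
  rw [hsum, hd] at h
  have h2 : a⁻¹ * (2⁻¹ * (⟪y, y⟫ - 1)) = 0 := by linear_combination h
  have := (mul_eq_zero.mp h2).resolve_left (inv_pos.mpr ha).ne'
  linarith

/-- Young's inequality behind the energy estimate: `m` plays the role of `|v̄|²`, `s` of `|d|`,
`Δ` of the increment of the energy and `c` of the lower-order term. -/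
theorem energy_scalar {a c₀ m r s c Δ : ℝ} (ha : 0 < a) (hr : r ^ 2 = m)
    (hm : m = 1 - s ^ 2 / 4) (hc : c ≤ c₀ * r * s)
    (h : a⁻¹ * s ^ 2 = -m * (Δ / 2 - c)) : Δ ≤ 2 * a * c₀ ^ 2 := by
  have hm0 : 0 ≤ m := hr ▸ sq_nonneg r
  have hs : s ^ 2 = a * (-m * (Δ / 2 - c)) := by
    rw [← h, mul_inv_cancel_left₀ ha.ne']
  have hmpos : 0 < m := by
    rcases hm0.eq_or_lt with h0 | h0
    · rw [← h0] at hs hm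
      linarith
    · exact h0
  have hm1 : m ≤ 1 := by nlinarith [sq_nonneg s]
  have hmm : m ^ 2 ≤ 1 := by nlinarith
  -- Multiplied by `a m`: `a m c₀ r s ≤ s² + (a m c₀ r)² / 4`.
  have hY : a * m * (c₀ * r * s) ≤ s ^ 2 + (a * c₀) ^ 2 * m ^ 3 / 4 := by
    have : (a * m * c₀ * r) ^ 2 = (a * c₀) ^ 2 * m ^ 3 := by
      rw [mul_pow, hr]
      ring
    nlinarith [sq_nonneg (s - a * m * c₀ * r / 2)]
  have ham : 0 < a * m := mul_pos ha hmpos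
  have hac : a * m * c ≤ a * m * (c₀ * r * s) := mul_le_mul_of_nonneg_left hc ham.le
  have hfin : a * m * (Δ / 2) ≤ a * m * (a * c₀ ^ 2 * m ^ 2 / 4) := by
    nlinarith
  have hle := le_of_mul_le_mul_left hfin ham
  have hk : 0 ≤ a * c₀ ^ 2 := by positivity
  have := mul_le_mul_of_nonneg_left hmm hk
  linarith

/-- Energy increment caused by the update of one index. -/
theorem sweep_energy {H : Type*} [NormedAddCommGroup H] [InnerProductSpace ℝ H] {k : ℕ}
    {a c₀ : ℝ} (ha : 0 < a) {B C : H →ₗ[ℝ] H →ₗ[ℝ] ℝ} {e : Fin k → H} {i : Fin k} {y w : H}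
    (hw : w = (2 : ℝ)⁻¹ • (y + e i)) (hBsymm : ∀ x y : H, B x y = B y x)
    (hC : ∀ x y : H, |C x y| ≤ c₀ * ‖x‖ * ‖y‖)
    (he : ∀ j l : Fin k, ⟪e j, e l⟫ = if j = l then (1 : ℝ) else 0)
    (hnd : a⁻¹ ≠ (1 / 2) * (B - C) w w) (heq : SweepEq a (B - C) e i y w) :
    B y y ≤ B (e i) (e i) + 2 * a * c₀ ^ 2 := by
  obtain ⟨horth, hy⟩ := sweep_index ha hw he hnd heq
  have hei : ⟪e i, e i⟫ = 1 := by rw [he, if_pos rfl]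
  have hsum : ∑ l ∈ Finset.univ.erase i, ⟪w, w⟫ * ⟪e l, y - e i⟫ * (B - C) w (e l) = 0 := by
    refine Finset.sum_eq_zero fun l hl => ?_
    have hl' : l ≠ i := (Finset.mem_erase.mp hl).1
    rw [inner_sub_right, real_inner_comm y (e l), horth l hl', he l i, if_neg hl']
    ring
  have hwd : ⟪w, y - e i⟫ = 0 := by
    rw [hw, real_inner_smul_left, inner_add_left, inner_sub_right, inner_sub_right, hy, hei,
      real_inner_comm y (e i)]
    ring
  have hm : ⟪w, w⟫ = 1 - ‖y - e i‖ ^ 2 / 4 := by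
    rw [← real_inner_self_eq_norm_sq, hw, real_inner_smul_left, real_inner_smul_right,
      inner_add_left, inner_add_right, inner_add_right, inner_sub_left, inner_sub_right,
      inner_sub_right, hy, hei, real_inner_comm y (e i)]
    ring
  have hB : B w (y - e i) = (B y y - B (e i) (e i)) / 2 := by
    rw [hw]
    simp only [map_smul, map_add, map_sub, LinearMap.smul_apply, LinearMap.add_apply,
      smul_eq_mul, hBsymm (e i) y]
    ring
  have h := heq (y - e i)
  rw [hsum, hwd, real_inner_self_eq_norm_sq (y - e i), LinearMap.sub_apply,
    LinearMap.sub_apply, hB] at h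
  have := energy_scalar (r := ‖w‖) (Δ := B y y - B (e i) (e i)) ha (real_inner_self_eq_norm_sq w).symm hm
    ((le_abs_self _).trans (hC w (y - e i))) (by linear_combination h)
  linarith

/-- The family in force when index `n` is about to be treated: the first `n` vectors are
already updated. -/
def mixed {H : Type*} {k : ℕ} (vm vp : Fin k → H) (n : ℕ) (l : Fin k) : H :=
  if l.val < n then vp l else vm l

theorem StepEqs.sweepEq {H : Type*} [NormedAddCommGroup H] [InnerProductSpace ℝ H] {k : ℕ}
    {γ τ : ℝ} {vm vp : Fin k → H} {D : H →ₗ[ℝ] H →ₗ[ℝ] ℝ} (h : StepEqs γ τ vm vp D)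
    (i : Fin k) : SweepEq (γ * τ) D (mixed vm vp i) i (vp i) (midVec vm vp i) := by
  intro χ
  have hset : (Finset.univ.erase i : Finset (Fin k))
      = Finset.univ.filter (fun l => l < i) ∪ Finset.univ.filter (fun l => i < l) := by
    ext l
    simp [lt_or_lt_iff_ne]
  have hdisj : Disjoint (Finset.univ.filter (fun l => l < i))
      (Finset.univ.filter (fun l : Fin k => i < l)) := by
    rw [Finset.disjoint_filter]
    exact fun l _ h1 h2 => lt_asymm h1 h2
  have hi : mixed vm vp i i = vm i := by simp [mixed]
  rw [hi, h i χ, hset, Finset.sum_union hdisj, ← add_assoc]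
  congr 1
  · congr 1
    refine Finset.sum_congr rfl fun l hl => ?_
    have hl' : l.val < i.val := (Finset.mem_filter.mp hl).2
    rw [mixed, if_pos hl']
  · refine Finset.sum_congr rfl fun l hl => ?_
    have hl' : i.val < l.val := (Finset.mem_filter.mp hl).2
    rw [mixed, if_neg hl'.not_gt]

/-- Every intermediate family of a time step is orthonormal. -/
theorem step_orthonormal {H : Type*} [NormedAddCommGroup H] [InnerProductSpace ℝ H] {k : ℕ}
    {γ τ : ℝ} (ha : 0 < γ * τ) {vm vp : Fin k → H} {D : H →ₗ[ℝ] H →ₗ[ℝ] ℝ}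
    (h : StepEqs γ τ vm vp D) (hnd : StepNondeg γ τ vm vp D)
    (h0 : ∀ i j : Fin k, ⟪vm i, vm j⟫ = if i = j then (1 : ℝ) else 0) (n : ℕ) (hn : n ≤ k) :
    ∀ i j : Fin k, ⟪mixed vm vp n i, mixed vm vp n j⟫ = if i = j then (1 : ℝ) else 0 := by
  induction n with
  | zero => simpa [mixed] using h0
  | succ n ih =>
    have ih := ih (by omega)
    let p : Fin k := ⟨n, hn⟩
    have hp : mixed vm vp n p = vm p := by simp [mixed, p]
    obtain ⟨horth, hnorm⟩ := sweep_index (e := mixed vm vp n) (i := p) (y := vp p)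
      (w := midVec vm vp p) ha (by rw [hp]; rfl) ih
      (by rw [mul_comm γ τ]; exact hnd p) (h.sweepEq p)
    have hself : mixed vm vp (n + 1) p = vp p := by simp [mixed, p]
    have hother : ∀ l, l ≠ p → mixed vm vp (n + 1) l = mixed vm vp n l := by
      intro l hl
      have hne : l.val ≠ n := fun h => hl (Fin.ext h)
      have : l.val < n + 1 ↔ l.val < n := by omega
      simp only [mixed, this]
    intro i j
    by_cases hi : i = p <;> by_cases hj : j = p
    · rw [hi, hj, hself, if_pos rfl, hnorm]
    · rw [hi, hself, hother j hj, horth j hj, if_neg (Ne.symm hj)]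
    · rw [hj, hself, hother i hi, real_inner_comm, horth i hi, if_neg hi]
    · rw [hother i hi, hother j hj, ih]

/-- auxiliary-variable part of Theorem 4.1, abstract multi-step form. For
the fully discrete scheme with `Dₙ = B − Cₙ`, `B` symmetric positive semidefinite and
`|Cₙ(x,y)| ≤ c₀‖x‖‖y‖`, with orthonormal initial family, step equations and nondegeneracy at
every step, and `γ c₀ τ ≤ √2`, the families stay orthonormal and
`B(vᵢⁿ, vᵢⁿ) ≤ B(vᵢ⁰, vᵢ⁰) + 2 γ c₀² n τ` for all `0 ≤ n ≤ N`. -/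
theorem stmt_11 {H : Type*} [NormedAddCommGroup H] [InnerProductSpace ℝ H]
    (k N : ℕ) (hk : 1 ≤ k) (γ τ c₀ : ℝ) (hγ : 0 < γ) (hτ : 0 < τ) (hc₀ : 0 ≤ c₀)
    (hsmall : γ * c₀ * τ ≤ Real.sqrt 2)
    (B : H →ₗ[ℝ] H →ₗ[ℝ] ℝ) (hBsymm : ∀ x y : H, B x y = B y x)
    (hBpos : ∀ x : H, 0 ≤ B x x)
    (C : ℕ → (H →ₗ[ℝ] H →ₗ[ℝ] ℝ))
    (hC : ∀ n : ℕ, 1 ≤ n → n ≤ N → ∀ x y : H, |C n x y| ≤ c₀ * ‖x‖ * ‖y‖)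
    (v : ℕ → Fin k → H)
    (hinit : ∀ i j : Fin k, ⟪v 0 i, v 0 j⟫ = if i = j then (1 : ℝ) else 0)
    (hstep : ∀ n : ℕ, 1 ≤ n → n ≤ N → StepEqs γ τ (v (n - 1)) (v n) (B - C n))
    (hnd : ∀ n : ℕ, 1 ≤ n → n ≤ N → StepNondeg γ τ (v (n - 1)) (v n) (B - C n)) :
    ∀ n : ℕ, n ≤ N →
      (∀ i j : Fin k, ⟪v n i, v n j⟫ = if i = j then (1 : ℝ) else 0) ∧
      (∀ i : Fin k, B (v n i) (v n i) ≤ B (v 0 i) (v 0 i) + 2 * γ * c₀ ^ 2 * n * τ) := by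
  have ha : 0 < γ * τ := mul_pos hγ hτ
  intro n
  induction n with
  | zero => exact fun _ => ⟨hinit, fun i => by simp⟩
  | succ n ih =>
    intro hn
    obtain ⟨ho, hE⟩ := ih (by omega)
    have hS := hstep (n + 1) (by omega) hn
    have hN := hnd (n + 1) (by omega) hn
    rw [Nat.add_sub_cancel] at hS hN
    refine ⟨?_, fun i => ?_⟩
    · have := step_orthonormal ha hS hN ho k le_rfl
      simpa [mixed] using this
    · have hi : mixed (v n) (v (n + 1)) i i = v n i := by simp [mixed]
      have := sweep_energy (e := mixed (v n) (v (n + 1)) i) (i := i) (y := v (n + 1) i)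
        (w := midVec (v n) (v (n + 1)) i) ha (by rw [hi]; rfl) hBsymm
        (hC (n + 1) (by omega) hn) (step_orthonormal ha hS hN ho i i.isLt.le)
        (by rw [mul_comm γ τ]; exact hN i) (hS.sweepEq i)
      rw [hi] at this
      have h2 := hE i
      push_cast
      linarith
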